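/- Let V be a nonempty finite set and f : 2^V → ℝ a normalized submodular set function. Then the Shapley value φ ∈ ℝ^V, defined by φ_i = ∑_{C ⊆ V∖{i}} (|C|! (|V|−|C|−1)! / |V|!) (f(C ∪ {i}) − f(C)), lies in the core B(f), i.e. φ(X) ≤ f(X) for all X ⊆ V and φ(V) = f(V). -/

import Mathlib

open Finset

/-!
For a set `X` of players, consider the game `C ↦ f (C ∩ X)`. Submodularity makes every marginal
contribution of a player `i ∈ X` at least as large in this game as in `f`, whereas the players
outside `X` contribute nothing to it. As the Shapley value is monotone in the marginal
contributions, `φ(X)` is at most the sum of all Shapley values of the new game, and by efficiency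
this sum is `f X - f ∅`.

Efficiency is a telescoping identity: in the sum of all Shapley values, every coalition `D` occurs
with weight `1 / n.choose |D|` as a coalition just joined (unless `D = ∅`), and with the opposite
weight as a coalition about to be joined (unless `D` is everything).
-/

section Submodular

/-- Submodularity of a set function. -/
def IsSubmodular {V M : Type*} [DecidableEq V] [Add M] [LE M] (f : Finset V → M) : Prop :=
  ∀ X Y, f (X ∩ Y) + f (X ∪ Y) ≤ f X + f Y

lemma IsSubmodular.insert_sub_le_insert_sub {V M : Type*} [DecidableEq V] [AddCommGroup M]
    [Preorder M] [IsOrderedAddMonoid M] {f : Finset V → M} (hf : IsSubmodular f)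
    {C D : Finset V} {i : V} (hCD : C ⊆ D) (hi : i ∉ D) :
    f (insert i D) - f D ≤ f (insert i C) - f C := by
  have h := hf (insert i C) D
  rw [insert_inter_of_notMem hi, inter_eq_left.mpr hCD, insert_union,
    union_eq_right.mpr hCD] at h
  rwa [sub_le_sub_iff, add_comm]

end Submodular

section DoubleCounting

variable {V M : Type*} [Fintype V] [DecidableEq V]

lemma mem_powerset_univ_erase {C : Finset V} {i : V} : C ∈ (univ.erase i).powerset ↔ i ∉ C := by
  simp [subset_erase]

variable [AddCommMonoid M]

lemma sum_sum_powerset_univ_erase (h : Finset V → M) :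
    ∑ i, ∑ C ∈ (univ.erase i).powerset, h C = ∑ C, #Cᶜ • h C := by
  rw [sum_comm' (t' := univ) (s' := fun C => Cᶜ) (by simp [subset_erase])]
  simp only [sum_const]

lemma sum_sum_powerset_univ_erase_insert (h : Finset V → M) :
    ∑ i, ∑ C ∈ (univ.erase i).powerset, h (insert i C) = ∑ D, #D • h D := by
  have reindex (i : V) :
      ∑ C ∈ (univ.erase i).powerset, h (insert i C) = ∑ D with i ∈ D, h D := by
    refine sum_nbij' (insert i) (fun D => D.erase i) ?_ ?_ ?_ ?_ fun _ _ => rfl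
    · simp
    · simp [subset_erase]
    · exact fun C hC => erase_insert (mem_powerset_univ_erase.mp hC)
    · exact fun D hD => insert_erase (mem_filter.mp hD).2
  rw [sum_congr rfl fun i _ => reindex i,
    sum_comm' (t' := univ) (s' := fun D : Finset V => D) (by simp)]
  simp only [sum_const]

end DoubleCounting

section Weight

variable (𝕜 : Type*) [Field 𝕜]

/-- The weight, in the Shapley value of a game with `n` players, of the marginal contribution of a
player to a coalition of `k` others. It is meaningful for `k < n` only. -/
def shapleyWeight (n k : ℕ) : 𝕜 :=
  (k.factorial * (n - k - 1).factorial : 𝕜) / n.factorial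

lemma shapleyWeight_nonneg [LinearOrder 𝕜] [IsStrictOrderedRing 𝕜] (n k : ℕ) :
    0 ≤ shapleyWeight 𝕜 n k := by
  unfold shapleyWeight
  positivity

variable [CharZero 𝕜]

lemma sub_mul_shapleyWeight {n k : ℕ} (hk : k < n) :
    ((n - k : ℕ) : 𝕜) * shapleyWeight 𝕜 n k = (n.choose k : 𝕜)⁻¹ := by
  rw [Nat.cast_choose 𝕜 hk.le, inv_div, shapleyWeight,
    ← Nat.mul_factorial_pred (Nat.sub_ne_zero_of_lt hk)]
  push_cast
  ring

lemma succ_mul_shapleyWeight {n k : ℕ} (hk : k < n) :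
    ((k + 1 : ℕ) : 𝕜) * shapleyWeight 𝕜 n k = (n.choose (k + 1) : 𝕜)⁻¹ := by
  rw [Nat.cast_choose 𝕜 hk, inv_div, shapleyWeight, Nat.factorial_succ, Nat.sub_sub]
  push_cast
  ring

end Weight

section ShapleyValue

variable {V 𝕜 : Type*} [Fintype V] [DecidableEq V] [Field 𝕜]

/-- The Shapley value of the game `f`: the weighted average of the marginal contributions of a
player. -/
def shapleyValue (f : Finset V → 𝕜) (i : V) : 𝕜 :=
  ∑ C ∈ (univ.erase i).powerset,
    shapleyWeight 𝕜 (Fintype.card V) #C * (f (insert i C) - f C)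

lemma shapleyValue_eq_zero {f : Finset V → 𝕜} {i : V} (h : ∀ C, f (insert i C) = f C) :
    shapleyValue f i = 0 :=
  sum_eq_zero fun C _ => by rw [h, sub_self, mul_zero]

section Efficiency

variable [CharZero 𝕜] (f : Finset V → 𝕜)

lemma sum_sum_shapleyWeight_mul :
    ∑ i, ∑ C ∈ (univ.erase i).powerset, shapleyWeight 𝕜 (Fintype.card V) #C * f C =
      ∑ D, ((Fintype.card V).choose #D : 𝕜)⁻¹ * f D - f univ := by
  calc
    _ = ∑ D, #Dᶜ • (shapleyWeight 𝕜 (Fintype.card V) #D * f D) :=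
      sum_sum_powerset_univ_erase _
    _ = ∑ D ∈ univ.erase univ, #Dᶜ • (shapleyWeight 𝕜 (Fintype.card V) #D * f D) :=
      (sum_erase _ (by simp)).symm
    _ = ∑ D ∈ univ.erase univ, ((Fintype.card V).choose #D : 𝕜)⁻¹ * f D := by
      refine sum_congr rfl fun D hD => ?_
      rw [nsmul_eq_mul, ← mul_assoc, card_compl,
        sub_mul_shapleyWeight 𝕜 ((card_lt_iff_ne_univ D).mpr (ne_of_mem_erase hD))]
    _ = _ := by
      rw [sum_erase_eq_sub (mem_univ _), card_univ, Nat.choose_self, Nat.cast_one, inv_one,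
        one_mul]

lemma sum_sum_shapleyWeight_mul_insert :
    ∑ i, ∑ C ∈ (univ.erase i).powerset, shapleyWeight 𝕜 (Fintype.card V) #C * f (insert i C) =
      ∑ D, ((Fintype.card V).choose #D : 𝕜)⁻¹ * f D - f ∅ := by
  calc
    _ = ∑ i, ∑ C ∈ (univ.erase i).powerset,
          shapleyWeight 𝕜 (Fintype.card V) (#(insert i C) - 1) * f (insert i C) := by
      refine sum_congr rfl fun i _ => sum_congr rfl fun C hC => ?_
      rw [card_insert_of_notMem (mem_powerset_univ_erase.mp hC), Nat.add_sub_cancel]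
    _ = ∑ D, #D • (shapleyWeight 𝕜 (Fintype.card V) (#D - 1) * f D) :=
      sum_sum_powerset_univ_erase_insert
        fun D => shapleyWeight 𝕜 (Fintype.card V) (#D - 1) * f D
    _ = ∑ D ∈ univ.erase ∅, #D • (shapleyWeight 𝕜 (Fintype.card V) (#D - 1) * f D) :=
      (sum_erase _ (by simp)).symm
    _ = ∑ D ∈ univ.erase ∅, ((Fintype.card V).choose #D : 𝕜)⁻¹ * f D := by
      refine sum_congr rfl fun D hD => ?_
      obtain ⟨k, hk⟩ := Nat.exists_eq_succ_of_ne_zero (card_ne_zero.mpr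
        (nonempty_iff_ne_empty.mpr (ne_of_mem_erase hD)))
      have hkn : k < Fintype.card V := Nat.lt_of_succ_le (hk ▸ card_le_univ D)
      rw [nsmul_eq_mul, ← mul_assoc, hk, Nat.succ_sub_one, succ_mul_shapleyWeight 𝕜 hkn]
    _ = _ := by
      rw [sum_erase_eq_sub (mem_univ _), card_empty, Nat.choose_zero_right, Nat.cast_one, inv_one,
        one_mul]

theorem sum_shapleyValue : ∑ i, shapleyValue f i = f univ - f ∅ := by
  simp only [shapleyValue, mul_sub, sum_sub_distrib]
  rw [sum_sum_shapleyWeight_mul, sum_sum_shapleyWeight_mul_insert, sub_sub_sub_cancel_left]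

end Efficiency

variable [LinearOrder 𝕜] [IsStrictOrderedRing 𝕜] {f : Finset V → 𝕜}

lemma shapleyValue_le_shapleyValue {g : Finset V → 𝕜} {i : V}
    (h : ∀ C, i ∉ C → f (insert i C) - f C ≤ g (insert i C) - g C) :
    shapleyValue f i ≤ shapleyValue g i :=
  sum_le_sum fun C hC => mul_le_mul_of_nonneg_left (h C (mem_powerset_univ_erase.mp hC))
    (shapleyWeight_nonneg 𝕜 _ _)

lemma IsSubmodular.shapleyValue_le_shapleyValue_inter (hf : IsSubmodular f) {X : Finset V} {i : V}
    (hi : i ∈ X) : shapleyValue f i ≤ shapleyValue (fun C => f (C ∩ X)) i := by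
  refine shapleyValue_le_shapleyValue fun C hC => ?_
  rw [insert_inter_of_mem hi]
  exact hf.insert_sub_le_insert_sub inter_subset_left hC

theorem IsSubmodular.sum_shapleyValue_le (hf : IsSubmodular f) (X : Finset V) :
    ∑ i ∈ X, shapleyValue f i ≤ f X - f ∅ := by
  calc
    ∑ i ∈ X, shapleyValue f i
      ≤ ∑ i ∈ X, shapleyValue (fun C => f (C ∩ X)) i :=
      sum_le_sum fun _ hi => hf.shapleyValue_le_shapleyValue_inter hi
    _ = ∑ i, shapleyValue (fun C => f (C ∩ X)) i :=
      sum_subset (subset_univ X) fun _ _ hi =>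
        shapleyValue_eq_zero fun C => by rw [insert_inter_of_notMem hi]
    _ = f X - f ∅ := by rw [sum_shapleyValue, univ_inter, empty_inter]

end ShapleyValue

/-- The core (base polyhedron) of a cost game: the allocations of the total cost that charge no
coalition more than its own cost. -/
def core {V M : Type*} [Fintype V] [AddCommMonoid M] [LE M] (f : Finset V → M) : Set (V → M) :=
  {r | (∀ X, ∑ i ∈ X, r i ≤ f X) ∧ ∑ i, r i = f univ}

theorem shapley_in_core_general {V 𝕜 : Type*} [Fintype V] [DecidableEq V] [Field 𝕜]
    [LinearOrder 𝕜] [IsStrictOrderedRing 𝕜] {f : Finset V → 𝕜} (hnorm : f ∅ = 0)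
    (hsub : IsSubmodular f) : shapleyValue f ∈ core f :=
  ⟨fun X => by simpa only [hnorm, sub_zero] using hsub.sum_shapleyValue_le X,
    by rw [sum_shapleyValue, hnorm, sub_zero]⟩

/-- The Shapley value of a convex (normalized submodular cost) game lies in the core. -/
theorem shapley_in_core
    {V : Type*} [Fintype V] [DecidableEq V] [Nonempty V]
    (f : Finset V → ℝ)
    (hnorm : f ∅ = 0)
    (hsub : ∀ X Y : Finset V, f (X ∩ Y) + f (X ∪ Y) ≤ f X + f Y)
    (φ : V → ℝ)
    (hφ : ∀ i : V,
      φ i = ∑ C ∈ (Finset.univ.erase i).powerset,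
        ((C.card.factorial * (Fintype.card V - C.card - 1).factorial : ℝ) /
            (Fintype.card V).factorial) * (f (insert i C) - f C)) :
    (∀ X : Finset V, ∑ i ∈ X, φ i ≤ f X) ∧ ∑ i, φ i = f Finset.univ := by
  obtain rfl : φ = shapleyValue f := funext hφ
  exact shapley_in_core_general hnorm hsub
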